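/- arXiv:1003.5368 — 2 statements merged into one kernel-verified Lean document; each statement's English description precedes it below -/
import Mathlib

section
/- For 0 ≤ i ≤ d, b_0(W)b_1(W)···b_{i−1}(W) = p_i(θ_t); consequently b_i(W) = p_{i+1}(θ_t)/p_i(θ_t) for 0 ≤ i ≤ d−1 and c_i(W) = x_i(W)p_{i−1}(θ_t)/p_i(θ_t) for 1 ≤ i ≤ d (in particular p_i(θ_t) ≠ 0 for 0 ≤ i ≤ d). -/
open Matrix
open scoped Classical

noncomputable section

/-- The full setup: a `Q`-polynomial distance-regular graph `Γ = (X,R)` of diameter `D ≥ 3`,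
with adjacency matrix `A`, primitive idempotents `E_i`, eigenvalues `θ_i`,
Krein parameters `q^h_{ij}`, a fixed base vertex `x`, dual primitive idempotents `E*_i`,
dual adjacency matrix `A*` and dual eigenvalues `θ*_i`. -/
structure TSetup (X : Type*) [Fintype X] [DecidableEq X] where
  G : SimpleGraph X
  hGconn : G.Connected
  D : ℕ
  hD3 : 3 ≤ D
  hDiamLe : ∀ y z : X, G.dist y z ≤ D
  hDiamEq : ∃ y z : X, G.dist y z = D
  p : ℕ → ℕ → ℕ → ℕ
  hDRG : ∀ h i j : ℕ, h ≤ D → i ≤ D → j ≤ D → ∀ y z : X, G.dist y z = h →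
    Nat.card {w : X // G.dist y w = i ∧ G.dist z w = j} = p h i j
  A : Matrix X X ℂ
  hA : ∀ y z : X, A y z = if G.Adj y z then 1 else 0
  E : ℕ → Matrix X X ℂ
  hEzero : ∀ i : ℕ, D < i → E i = 0
  hEsum : ∑ i ∈ Finset.range (D + 1), E i = 1
  hEidem : ∀ i j : ℕ, i ≤ D → j ≤ D → E i * E j = if i = j then E i else 0
  hEsymm : ∀ i : ℕ, (E i)ᵀ = E i
  hEreal : ∀ i : ℕ, (E i).map (starRingEnd ℂ) = E i
  hE0 : E 0 = (Fintype.card X : ℂ)⁻¹ • Matrix.of (fun _ _ => (1 : ℂ))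
  θ : ℕ → ℝ
  hθinj : ∀ i j : ℕ, i ≤ D → j ≤ D → θ i = θ j → i = j
  hAspec : A = ∑ i ∈ Finset.range (D + 1), (θ i : ℂ) • E i
  q : ℕ → ℕ → ℕ → ℝ
  hKrein : ∀ i j : ℕ, i ≤ D → j ≤ D →
    Matrix.hadamard (E i) (E j) =
      (Fintype.card X : ℂ)⁻¹ • ∑ h ∈ Finset.range (D + 1), (q h i j : ℂ) • E h
  hQpoly0 : ∀ h i j : ℕ, h ≤ D → i ≤ D → j ≤ D →
    (i + j < h ∨ h + j < i ∨ h + i < j) → q h i j = 0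
  hQpoly1 : ∀ h i j : ℕ, h ≤ D → i ≤ D → j ≤ D →
    (h = i + j ∨ i = h + j ∨ j = h + i) → q h i j ≠ 0
  x : X
  Estar : ℕ → Matrix X X ℂ
  hEstarzero : ∀ i : ℕ, D < i → Estar i = 0
  hEstar : ∀ i : ℕ, i ≤ D → ∀ y z : X,
    Estar i y z = if y = z ∧ G.dist x y = i then 1 else 0
  Astar : Matrix X X ℂ
  hAstar : ∀ y z : X, Astar y z = if y = z then (Fintype.card X : ℂ) * E 1 x y else 0
  θstar : ℕ → ℝ
  hθstarinj : ∀ i j : ℕ, i ≤ D → j ≤ D → θstar i = θstar j → i = j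
  hAstarspec : Astar = ∑ i ∈ Finset.range (D + 1), (θstar i : ℂ) • Estar i

variable {X : Type*} [Fintype X] [DecidableEq X]

/-- The Terwilliger algebra `T = T(x)`, generated by `A` and `A*`. -/
def TSetup.T (S : TSetup X) : Subalgebra ℂ (Matrix X X ℂ) :=
  Algebra.adjoin ℂ {S.A, S.Astar}

/-- A thin irreducible `T`-module `W` with endpoint `r`, dual endpoint `t` and diameter `d`,
where `E*_i W ≠ 0` iff `r ≤ i ≤ r + d` and `E_i W ≠ 0` iff `t ≤ i ≤ t + d`. -/
structure TMod (S : TSetup X) where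
  W : Submodule ℂ (X → ℂ)
  hWinv : ∀ B ∈ S.T, ∀ w ∈ W, B *ᵥ w ∈ W
  hWne : W ≠ ⊥
  hWirr : ∀ U : Submodule ℂ (X → ℂ), U ≤ W →
    (∀ B ∈ S.T, ∀ w ∈ U, B *ᵥ w ∈ U) → U = ⊥ ∨ U = W
  hthin : ∀ i : ℕ, Module.finrank ℂ (W.map (S.Estar i).mulVecLin) ≤ 1
  r : ℕ
  t : ℕ
  d : ℕ
  hr : ∀ i : ℕ, W.map (S.Estar i).mulVecLin ≠ ⊥ ↔ r ≤ i ∧ i ≤ r + d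
  ht : ∀ i : ℕ, W.map (S.E i).mulVecLin ≠ ⊥ ↔ t ≤ i ∧ i ≤ t + d

open Classical in
/-- The action of a matrix `B` on `W` (the restriction of `B` to `W`; defined to be `0`
if `B` does not leave `W` invariant). -/
def actW (S : TSetup X) (M : TMod S) (B : Matrix X X ℂ) : M.W →ₗ[ℂ] M.W :=
  if h : ∀ w ∈ M.W, B.mulVecLin w ∈ M.W then B.mulVecLin.restrict h else 0

/-- `tr_W(B)`: the trace of the action of `B` on `W`. -/
def trW (S : TSetup X) (M : TMod S) (B : Matrix X X ℂ) : ℂ :=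
  LinearMap.trace ℂ M.W (actW S M B)

/-- `a_i(W) = tr_W(E*_{r+i} A)`. -/
def aW (S : TSetup X) (M : TMod S) (i : ℕ) : ℂ :=
  trW S M (S.Estar (M.r + i) * S.A)

/-- `x_i(W) = tr_W(E*_{r+i} A E*_{r+i-1} A)`, with `x_0(W) = 0`. -/
def xW (S : TSetup X) (M : TMod S) (i : ℕ) : ℂ :=
  if i = 0 then 0 else trW S M (S.Estar (M.r + i) * S.A * S.Estar (M.r + i - 1) * S.A)

/-- `a*_i(W) = tr_W(E_{t+i} A*)`. -/
def astarW (S : TSetup X) (M : TMod S) (i : ℕ) : ℂ :=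
  trW S M (S.E (M.t + i) * S.Astar)

/-- `x*_i(W) = tr_W(E_{t+i} A* E_{t+i-1} A*)`, with `x*_0(W) = 0`. -/
def xstarW (S : TSetup X) (M : TMod S) (i : ℕ) : ℂ :=
  if i = 0 then 0 else trW S M (S.E (M.t + i) * S.Astar * S.E (M.t + i - 1) * S.Astar)

/-- The polynomials `p_i`: `p_0 = 1`, `p_{-1} = 0`,
`λ p_i = p_{i+1} + a_i(W) p_i + x_i(W) p_{i-1}`. -/
def pW (S : TSetup X) (M : TMod S) : ℕ → Polynomial ℂ
  | 0 => 1
  | 1 => Polynomial.X - Polynomial.C (aW S M 0)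
  | (n + 2) =>
      (Polynomial.X - Polynomial.C (aW S M (n + 1))) * pW S M (n + 1)
        - Polynomial.C (xW S M (n + 1)) * pW S M n

/-- The polynomials `p*_i`: `p*_0 = 1`, `p*_{-1} = 0`,
`λ p*_i = p*_{i+1} + a*_i(W) p*_i + x*_i(W) p*_{i-1}`. -/
def pstarW (S : TSetup X) (M : TMod S) : ℕ → Polynomial ℂ
  | 0 => 1
  | 1 => Polynomial.X - Polynomial.C (astarW S M 0)
  | (n + 2) =>
      (Polynomial.X - Polynomial.C (astarW S M (n + 1))) * pstarW S M (n + 1)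
        - Polynomial.C (xstarW S M (n + 1)) * pstarW S M n

/-- The Hermitian inner product `⟨u,v⟩ = Σ_y u_y conj(v_y)` on `ℂ^X`. -/
def herm (u v : X → ℂ) : ℂ := ∑ y, u y * (starRingEnd ℂ) (v y)

/-- `ν(W)`, the multiplicative inverse of `m_0(W) = tr_W(E_t E*_r)`. -/
def nuW (S : TSetup X) (M : TMod S) : ℂ :=
  (trW S M (S.E M.t * S.Estar M.r))⁻¹

/-- `k_i(W) = ν(W) m*_i(W)` where `m*_i(W) = tr_W(E*_{r+i} E_t)`. -/
def kW (S : TSetup X) (M : TMod S) (i : ℕ) : ℂ :=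
  nuW S M * trW S M (S.Estar (M.r + i) * S.E M.t)

/-- `k*_i(W) = ν(W) m_i(W)` where `m_i(W) = tr_W(E_{t+i} E*_r)`. -/
def kstarW (S : TSetup X) (M : TMod S) (i : ℕ) : ℂ :=
  nuW S M * trW S M (S.E (M.t + i) * S.Estar M.r)

/-!
Let `A` and orthogonal idempotents `F_0, …, F_d` with sum `1` act irreducibly on `V`, and let `u` be
an eigenvector of `A` for `θ`. If the components `F_i u` satisfy a three-term relation under `A`,
then comparing the `F_i`-components in `A u = θ u` gives `c_i + a_i + b_i = θ`. By irreducibility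
the components span `V`, so each `F_i` has rank one, and computing a trace on `F_i u` gives
`tr (F_i A F_{i-1} A) = b_{i-1} c_i`. The recurrence for `p_i(θ)` is then solved by `b_0 ⋯ b_{i-1}`.
If some `b_i` vanished, the components of index `> i` would span a proper nonzero invariant
subspace, contradicting irreducibility. For the theorem, let `V = W` and let `F_i` be the action of
`E*_{r+i}` on it.
-/

section SpectralIdempotents

variable {K R ι : Type*}

section CommSemiring

variable [CommSemiring K] [Semiring R] [Algebra K R] {e : ι → R}

theorem sum_smul_mul_idempotent (he : OrthogonalIdempotents e) {s : Finset ι} (θ : ι → K) {i : ι}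
    (hi : i ∈ s) : (∑ j ∈ s, θ j • e j) * e i = θ i • e i := by
  simp [Finset.sum_mul, he.mul_eq, Finset.sum_ite_eq', hi]

theorem aeval_sum_smul_idempotent (he : OrthogonalIdempotents e) {s : Finset ι}
    (hs : ∑ i ∈ s, e i = 1) (θ : ι → K) (p : Polynomial K) :
    Polynomial.aeval (∑ j ∈ s, θ j • e j) p = ∑ i ∈ s, p.eval (θ i) • e i := by
  set B := ∑ j ∈ s, θ j • e j
  have h_mul (i : ι) (hi : i ∈ s) : Polynomial.aeval B p * e i = p.eval (θ i) • e i := by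
    induction p using Polynomial.induction_on with
    | C k => simp [Algebra.smul_def]
    | add p q hp hq => simp [add_mul, hp, hq, add_smul]
    | monomial n k ih =>
      rw [pow_succ, ← mul_assoc, map_mul, Polynomial.aeval_X, mul_assoc,
        sum_smul_mul_idempotent he θ hi, mul_smul_comm, ih, smul_smul,
        Polynomial.eval_mul (p := _ * _), Polynomial.eval_X, mul_comm]
  rw [← mul_one (Polynomial.aeval B p), ← hs, Finset.mul_sum]
  exact Finset.sum_congr rfl h_mul

end CommSemiring

theorem idempotent_mem_adjoin_sum_smul [Field K] [Ring R] [Algebra K R] {e : ι → R}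
    (he : OrthogonalIdempotents e) {s : Finset ι}
    (hs : ∑ i ∈ s, e i = 1) {θ : ι → K} (hθ : Set.InjOn θ s) {i : ι} (hi : i ∈ s) :
    e i ∈ Algebra.adjoin K {∑ j ∈ s, θ j • e j} := by
  have h_lagrange : Polynomial.aeval (∑ j ∈ s, θ j • e j) (Lagrange.basis s θ i) = e i := by
    rw [aeval_sum_smul_idempotent he hs, Finset.sum_eq_single_of_mem i hi,
      Lagrange.eval_basis_self hθ hi, one_smul]
    intro j hj hji
    rw [Lagrange.eval_basis_of_ne hji.symm hj, zero_smul]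
  exact h_lagrange ▸ Polynomial.aeval_mem_adjoin_singleton K _

end SpectralIdempotents

section ThreeTermRecurrence

variable {R : Type*} [CommRing R]

/-- The monic polynomials with `p_0 = 1`, `p_{-1} = 0` and
`λ p_i = p_{i+1} + a_i p_i + x_i p_{i-1}`, so that `x_0` plays no role. -/
def recurrencePoly (a x : ℕ → R) : ℕ → Polynomial R
  | 0 => 1
  | 1 => Polynomial.X - Polynomial.C (a 0)
  | n + 2 => (Polynomial.X - Polynomial.C (a (n + 1))) * recurrencePoly a x (n + 1) -
      Polynomial.C (x (n + 1)) * recurrencePoly a x n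

theorem prod_range_eq_eval_recurrencePoly {a b c x : ℕ → R} {θ : R} {d : ℕ}
    (h_row : ∀ i < d, (if i = 0 then 0 else c i) + a i + b i = θ)
    (hx : ∀ i < d, x (i + 1) = b i * c (i + 1)) :
    ∀ i ≤ d, ∏ h ∈ Finset.range i, b h = (recurrencePoly a x i).eval θ
  | 0, _ => by simp [recurrencePoly]
  | 1, hi => by simp [recurrencePoly, ← h_row 0 hi]
  | n + 2, hi => by
    have ih₀ := prod_range_eq_eval_recurrencePoly h_row hx n (by lia)
    have ih₁ := prod_range_eq_eval_recurrencePoly h_row hx (n + 1) (by lia)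
    have hθ := h_row (n + 1) (by lia)
    rw [if_neg n.succ_ne_zero] at hθ
    simp only [recurrencePoly, Polynomial.eval_sub, Polynomial.eval_mul, Polynomial.eval_X,
      Polynomial.eval_C]
    rw [← ih₁, ← ih₀, hx n (by lia), ← hθ, Finset.prod_range_succ, Finset.prod_range_succ]
    ring

end ThreeTermRecurrence

section IrreducibleDecomposition

open Module

variable {K V : Type*} [AddCommGroup V]

section CommRing

variable [CommRing K] [Module K V]

/-- The linear map `A` acts on the sequence `v_0, …, v_d` as a tridiagonal matrix with entries
`b_{i-1}`, `a_i`, `c_{i+1}`, where `b_{-1} = 0`. With `v_i = E*_{r+i} u` these are the intersection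
numbers of a `T`-module. -/
def IsTridiagonalOn (A : End K V) (v : ℕ → V) (d : ℕ) (a b c : ℕ → K) : Prop :=
  ∀ i ≤ d, A (v i) =
    (if i = 0 then 0 else b (i - 1) • v (i - 1)) + a i • v i + c (i + 1) • v (i + 1)

/-- The orthogonal idempotents `F_0, …, F_d` are nonzero, sum to `1` and act irreducibly together
with `A`. This models the action of `A` and the `E*_{r+i}` on an irreducible `T`-module of endpoint
`r` and diameter `d`; the `F_i` with `i > d` are forced to vanish. -/
structure IsIrreducibleDecomposition (A : End K V) (F : ℕ → End K V) (d : ℕ) : Prop where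
  orthogonal : OrthogonalIdempotents F
  sum_eq_one : ∑ i ∈ Finset.range (d + 1), F i = 1
  ne_zero : ∀ i ≤ d, F i ≠ 0
  irreducible : ∀ U ∈ A.invtSubmodule, (∀ i, U ∈ (F i).invtSubmodule) → U = ⊥ ∨ U = ⊤

/-- The span of the components `F_k u, …, F_d u` of `u`. -/
def tailSpan (F : ℕ → End K V) (u : V) (k d : ℕ) : Submodule K V :=
  Submodule.span K ((F · u) '' Set.Icc k d)

theorem tailSpan_le_iff {F : ℕ → End K V} {u : V} {k d : ℕ} {U : Submodule K V} :
    tailSpan F u k d ≤ U ↔ ∀ i, k ≤ i → i ≤ d → F i u ∈ U := by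
  rw [tailSpan, Submodule.span_le, Set.image_subset_iff]
  simp [Set.subset_def]

theorem apply_apply_of_orthogonal {F : ℕ → End K V} (hF : OrthogonalIdempotents F) (i j : ℕ)
    (v : V) : F i (F j v) = if i = j then F i v else 0 := by
  rw [← Module.End.mul_apply, hF.mul_eq]
  split_ifs <;> rfl

theorem IsTridiagonalOn.idempotent_apply {A : End K V} {F : ℕ → End K V} {d : ℕ} {u : V}
    {a b c : ℕ → K} (h_tri : IsTridiagonalOn A (F · u) d a b c) (hF : OrthogonalIdempotents F)
    (i : ℕ) {j : ℕ} (hj : j ≤ d) :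
    F i (A (F j u)) = ((if j = i + 1 then b i else 0) + (if j = i then a i else 0) +
      (if i = j + 1 then c i else 0)) • F i u := by
  simp only [h_tri j hj, map_add, map_smul, apply_ite (F i), map_zero,
    apply_apply_of_orthogonal hF, add_smul, ite_smul, smul_ite, zero_smul, smul_zero]
  grind

namespace IsIrreducibleDecomposition

variable {A : End K V} {F : ℕ → End K V} {d : ℕ} {u : V} {a b c : ℕ → K}

theorem sum_apply (h : IsIrreducibleDecomposition A F d) (v : V) :
    ∑ i ∈ Finset.range (d + 1), F i v = v := by
  rw [← LinearMap.sum_apply, h.sum_eq_one, End.one_apply]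

theorem eq_zero_of_lt (h : IsIrreducibleDecomposition A F d) {i : ℕ} (hi : d < i) : F i = 0 := by
  rw [← mul_one (F i), ← h.sum_eq_one, h.orthogonal.mul_sum_of_notMem (by simpa using hi)]

theorem apply_mem_tailSpan (h : IsIrreducibleDecomposition A F d) {k i : ℕ} (hki : k ≤ i) :
    F i u ∈ tailSpan F u k d := by
  rcases le_or_gt i d with hi | hi
  · exact Submodule.subset_span ⟨i, ⟨hki, hi⟩, rfl⟩
  · simp [h.eq_zero_of_lt hi]

theorem tailSpan_mem_invtSubmodule_idempotent (h : IsIrreducibleDecomposition A F d) (k i : ℕ) :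
    tailSpan F u k d ∈ (F i).invtSubmodule := by
  refine tailSpan_le_iff.2 fun j hkj _ ↦ ?_
  rw [Submodule.mem_comap, apply_apply_of_orthogonal h.orthogonal]
  split_ifs with hij
  · exact h.apply_mem_tailSpan (hij ▸ hkj)
  · exact zero_mem _

theorem tailSpan_mem_invtSubmodule (h : IsIrreducibleDecomposition A F d)
    (h_tri : IsTridiagonalOn A (F · u) d a b c) {k : ℕ} (hk : k = 0 ∨ b (k - 1) = 0) :
    tailSpan F u k d ∈ A.invtSubmodule := by
  refine tailSpan_le_iff.2 fun j hkj hjd ↦ ?_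
  rw [Submodule.mem_comap, h_tri j hjd]
  refine add_mem (add_mem ?_ ?_) ?_
  · rcases hkj.eq_or_lt with rfl | hlt
    · rcases hk with rfl | hb
      · simp
      · simp [hb]
    · rw [if_neg (by lia)]
      exact Submodule.smul_mem _ _ (h.apply_mem_tailSpan (by lia))
  · exact Submodule.smul_mem _ _ (h.apply_mem_tailSpan hkj)
  · exact Submodule.smul_mem _ _ (h.apply_mem_tailSpan (by lia))

theorem tailSpan_eq_bot_or_top (h : IsIrreducibleDecomposition A F d)
    (h_tri : IsTridiagonalOn A (F · u) d a b c) {k : ℕ} (hk : k = 0 ∨ b (k - 1) = 0) :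
    tailSpan F u k d = ⊥ ∨ tailSpan F u k d = ⊤ :=
  h.irreducible _ (h.tailSpan_mem_invtSubmodule h_tri hk)
    (h.tailSpan_mem_invtSubmodule_idempotent k)

theorem tailSpan_zero_eq_top (h : IsIrreducibleDecomposition A F d)
    (h_tri : IsTridiagonalOn A (F · u) d a b c) (hu : u ≠ 0) : tailSpan F u 0 d = ⊤ := by
  have hu_mem : u ∈ tailSpan F u 0 d := by
    have h_sum_mem : ∑ i ∈ Finset.range (d + 1), F i u ∈ tailSpan F u 0 d :=
      sum_mem fun i _ ↦ h.apply_mem_tailSpan i.zero_le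
    rwa [h.sum_apply] at h_sum_mem
  refine (h.tailSpan_eq_bot_or_top h_tri (.inl rfl)).resolve_left fun h_bot ↦ hu ?_
  simpa [h_bot] using hu_mem

theorem moduleFinite (h : IsIrreducibleDecomposition A F d)
    (h_tri : IsTridiagonalOn A (F · u) d a b c) (hu : u ≠ 0) : Module.Finite K V :=
  Module.finite_def.2 <| h.tailSpan_zero_eq_top h_tri hu ▸
    Submodule.fg_span ((Set.finite_Icc 0 d).image (F · u))

theorem range_le_span_singleton (h : IsIrreducibleDecomposition A F d)
    (h_tri : IsTridiagonalOn A (F · u) d a b c) (hu : u ≠ 0) (i : ℕ) :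
    LinearMap.range (F i) ≤ K ∙ F i u := by
  rw [LinearMap.range_eq_map, Submodule.map_le_iff_le_comap, ← h.tailSpan_zero_eq_top h_tri hu,
    tailSpan_le_iff]
  intro j _ _
  rw [Submodule.mem_comap, apply_apply_of_orthogonal h.orthogonal]
  split_ifs
  · exact Submodule.mem_span_singleton_self _
  · exact zero_mem _

theorem apply_ne_zero (h : IsIrreducibleDecomposition A F d)
    (h_tri : IsTridiagonalOn A (F · u) d a b c) (hu : u ≠ 0) {i : ℕ} (hi : i ≤ d) :
    F i u ≠ 0 := by
  intro h_zero
  have h_range := h.range_le_span_singleton h_tri hu i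
  rw [h_zero, Submodule.span_zero_singleton, le_bot_iff, LinearMap.range_eq_bot] at h_range
  exact h.ne_zero i hi h_range

theorem coeff_ne_zero (h : IsIrreducibleDecomposition A F d)
    (h_tri : IsTridiagonalOn A (F · u) d a b c) (hu : u ≠ 0) {i : ℕ} (hi : i < d) : b i ≠ 0 := by
  intro hb
  rcases h.tailSpan_eq_bot_or_top h_tri (k := i + 1) (.inr hb) with h_bot | h_top
  · have h_mem : F d u ∈ tailSpan F u (i + 1) d := h.apply_mem_tailSpan hi
    rw [h_bot, Submodule.mem_bot] at h_mem
    exact h.apply_ne_zero h_tri hu le_rfl h_mem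
  · have h_le : tailSpan F u (i + 1) d ≤ LinearMap.ker (F 0) := by
      refine tailSpan_le_iff.2 fun j hj _ ↦ ?_
      rw [LinearMap.mem_ker, apply_apply_of_orthogonal h.orthogonal, if_neg (by lia)]
    rw [h_top, top_le_iff, LinearMap.ker_eq_top] at h_le
    exact h.ne_zero 0 d.zero_le h_le

end IsIrreducibleDecomposition

end CommRing

section Field

variable [Field K] [Module K V]

theorem trace_eq_of_range_le_span_singleton [FiniteDimensional K V] {f : End K V} {v : V} {k : K}
    (hv : v ≠ 0) (hf : LinearMap.range f ≤ K ∙ v) (hk : f v = k • v) :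
    LinearMap.trace K V f = k := by
  obtain ⟨ψ, hψ⟩ := Projective.exists_dual_eq_one K hv
  have h_rank_one : f = (ψ ∘ₗ f).smulRight v := by
    ext w
    obtain ⟨m, hm⟩ := Submodule.mem_span_singleton.1 (hf ⟨w, rfl⟩)
    simp [← hm, hψ]
  rw [h_rank_one, LinearMap.trace_smulRight]
  simp [hk, hψ]

namespace IsIrreducibleDecomposition

variable {A : End K V} {F : ℕ → End K V} {d : ℕ} {u : V} {a b c : ℕ → K} {θ : K}

theorem row_sum (h : IsIrreducibleDecomposition A F d)
    (h_tri : IsTridiagonalOn A (F · u) d a b c) (hu : u ≠ 0) (hAu : A u = θ • u) {i : ℕ}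
    (hi : i < d) : (if i = 0 then 0 else c i) + a i + b i = θ := by
  have h_left : F i (A u) = ((if i = 0 then 0 else c i) + a i + b i) • F i u := by
    calc F i (A u)
        = ∑ j ∈ Finset.range (d + 1), F i (A (F j u)) := by
          rw [← map_sum, ← map_sum, h.sum_apply]
      _ = (∑ j ∈ Finset.range (d + 1), ((if j = i + 1 then b i else 0) +
            (if j = i then a i else 0) + (if i = j + 1 then c i else 0))) • F i u := by
          rw [Finset.sum_smul]
          exact Finset.sum_congr rfl fun j hj ↦
            h_tri.idempotent_apply h.orthogonal i (Finset.mem_range_succ_iff.1 hj)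
      _ = ((if i = 0 then 0 else c i) + a i + b i) • F i u := by
          congr 1
          simp only [Finset.sum_add_distrib, Finset.sum_ite_eq', Finset.mem_range]
          cases i with
          | zero => simp [hi, add_comm]
          | succ k =>
            have hk : k < d + 1 := by lia
            have hk₂ : k + 2 ≤ d := hi
            simp [hi.le, hk, hk₂, add_comm, add_left_comm]
  have h_right : F i (A u) = θ • F i u := by rw [hAu, map_smul]
  exact smul_left_injective K (h.apply_ne_zero h_tri hu hi.le) (h_left.symm.trans h_right)

theorem trace_mul_eq (h : IsIrreducibleDecomposition A F d)
    (h_tri : IsTridiagonalOn A (F · u) d a b c) (hu : u ≠ 0) {i : ℕ} (hi : i < d) :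
    LinearMap.trace K V (F (i + 1) * A * F i * A) = b i * c (i + 1) := by
  have := h.moduleFinite h_tri hu
  refine trace_eq_of_range_le_span_singleton (h.apply_ne_zero h_tri hu hi)
    (le_trans ?_ (h.range_le_span_singleton h_tri hu (i + 1))) ?_
  · rw [mul_assoc, mul_assoc]
    exact LinearMap.range_comp_le_range _ _
  · have h_down : F i (A (F (i + 1) u)) = b i • F i u := by
      simp [h_tri.idempotent_apply h.orthogonal i hi, add_assoc]
    have h_up : F (i + 1) (A (F i u)) = c (i + 1) • F (i + 1) u := by
      simp [h_tri.idempotent_apply h.orthogonal (i + 1) hi.le, add_assoc]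
    simp only [End.mul_apply]
    rw [h_down, map_smul, map_smul, h_up, smul_smul]

end IsIrreducibleDecomposition

theorem stmt11_general {A : End K V} {F : ℕ → End K V} {d : ℕ} {u : V} {θ : K}
    {a b c x : ℕ → K} (h : IsIrreducibleDecomposition A F d) (hu : u ≠ 0) (hAu : A u = θ • u)
    (h_tri : IsTridiagonalOn A (F · u) d a b c)
    (hx : ∀ i < d, x (i + 1) = LinearMap.trace K V (F (i + 1) * A * F i * A)) :
    (∀ i ≤ d, ∏ j ∈ Finset.range i, b j = (recurrencePoly a x i).eval θ) ∧
    (∀ i ≤ d, (recurrencePoly a x i).eval θ ≠ 0) ∧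
    (∀ i < d, b i = (recurrencePoly a x (i + 1)).eval θ / (recurrencePoly a x i).eval θ) ∧
    (∀ i, 1 ≤ i → i ≤ d →
      c i = x i * (recurrencePoly a x (i - 1)).eval θ / (recurrencePoly a x i).eval θ) := by
  have hx_mul (i : ℕ) (hi : i < d) : x (i + 1) = b i * c (i + 1) :=
    (hx i hi).trans (h.trace_mul_eq h_tri hu hi)
  have h_prod := prod_range_eq_eval_recurrencePoly
    (fun i hi ↦ h.row_sum h_tri hu hAu hi) hx_mul
  have h_ne (i : ℕ) (hi : i ≤ d) : (recurrencePoly a x i).eval θ ≠ 0 := by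
    rw [← h_prod i hi, Finset.prod_ne_zero_iff]
    intro j hj
    exact h.coeff_ne_zero h_tri hu ((Finset.mem_range.1 hj).trans_le hi)
  refine ⟨h_prod, h_ne, fun i hi ↦ ?_, fun i hi1 hi ↦ ?_⟩
  · rw [eq_div_iff (h_ne i hi.le), ← h_prod i hi.le, ← h_prod (i + 1) hi,
      Finset.prod_range_succ, mul_comm]
  · obtain ⟨k, rfl⟩ := Nat.exists_eq_add_of_le' hi1
    rw [eq_div_iff (h_ne _ hi), Nat.add_sub_cancel, ← h_prod _ hi, ← h_prod k (by lia),
      Finset.prod_range_succ, hx_mul k hi]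
    ring

end Field

end IrreducibleDecomposition

namespace TSetup

variable (S : TSetup X)

theorem orthogonalIdempotents_E : OrthogonalIdempotents S.E := by
  refine OrthogonalIdempotents.iff_mul_eq.2 fun i j ↦ ?_
  rcases le_or_gt i S.D with hi | hi
  · rcases le_or_gt j S.D with hj | hj
    · exact S.hEidem i j hi hj
    · rw [S.hEzero j hj, mul_zero, if_neg (by lia)]
  · simp [S.hEzero i hi]

theorem Estar_eq_diagonal (i : ℕ) :
    S.Estar i = diagonal fun y ↦ if S.G.dist S.x y = i then 1 else 0 := by
  ext y z
  rcases le_or_gt i S.D with hi | hi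
  · simp [S.hEstar i hi, diagonal_apply, ite_and]
  · have hy : S.G.dist S.x y ≠ i := ((S.hDiamLe S.x y).trans_lt hi).ne
    simp [S.hEstarzero i hi, diagonal_apply, hy]

theorem orthogonalIdempotents_Estar : OrthogonalIdempotents S.Estar := by
  refine OrthogonalIdempotents.iff_mul_eq.2 fun i j ↦ ?_
  simp only [Estar_eq_diagonal, diagonal_mul_diagonal]
  split_ifs with hij
  · simp [hij]
  · rw [diagonal_eq_zero]
    ext y
    simp only [Pi.zero_apply]
    grind

theorem sum_Estar : ∑ i ∈ Finset.range (S.D + 1), S.Estar i = 1 := by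
  ext y z
  simp [Estar_eq_diagonal, Matrix.sum_apply, diagonal_apply, Matrix.one_apply,
    Nat.lt_succ_of_le (S.hDiamLe S.x y)]

theorem A_mem_T : S.A ∈ S.T := Algebra.subset_adjoin (by simp)

theorem E_mem_T (i : ℕ) : S.E i ∈ S.T := by
  rcases le_or_gt i S.D with hi | hi
  · refine Algebra.adjoin_mono (s := {S.A}) (by simp) ?_
    rw [S.hAspec]
    refine idempotent_mem_adjoin_sum_smul S.orthogonalIdempotents_E S.hEsum
      (θ := fun j ↦ (S.θ j : ℂ)) (fun j hj k hk hjk ↦ ?_) (Finset.mem_range_succ_iff.2 hi)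
    exact S.hθinj j k (by simpa using hj) (by simpa using hk) (by simpa using hjk)
  · simp [S.hEzero i hi]

theorem Estar_mem_T (i : ℕ) : S.Estar i ∈ S.T := by
  rcases le_or_gt i S.D with hi | hi
  · refine Algebra.adjoin_mono (s := {S.Astar}) (by simp) ?_
    rw [S.hAstarspec]
    refine idempotent_mem_adjoin_sum_smul S.orthogonalIdempotents_Estar S.sum_Estar
      (θ := fun j ↦ (S.θstar j : ℂ)) (fun j hj k hk hjk ↦ ?_) (Finset.mem_range_succ_iff.2 hi)
    exact S.hθstarinj j k (by simpa using hj) (by simpa using hk) (by simpa using hjk)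
  · simp [S.hEstarzero i hi]

theorem A_mul_E (i : ℕ) : S.A * S.E i = (S.θ i : ℂ) • S.E i := by
  rcases le_or_gt i S.D with hi | hi
  · rw [S.hAspec]
    exact sum_smul_mul_idempotent S.orthogonalIdempotents_E _ (Finset.mem_range_succ_iff.2 hi)
  · simp [S.hEzero i hi]

theorem Astar_mul_Estar (i : ℕ) : S.Astar * S.Estar i = (S.θstar i : ℂ) • S.Estar i := by
  rcases le_or_gt i S.D with hi | hi
  · rw [S.hAstarspec]
    exact sum_smul_mul_idempotent S.orthogonalIdempotents_Estar _ (Finset.mem_range_succ_iff.2 hi)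
  · simp [S.hEstarzero i hi]

theorem mulVec_mem_of_mem_T {U : Submodule ℂ (X → ℂ)} (hA : ∀ w ∈ U, S.A *ᵥ w ∈ U)
    (hAstar : ∀ w ∈ U, S.Astar *ᵥ w ∈ U) : ∀ B ∈ S.T, ∀ w ∈ U, B *ᵥ w ∈ U := by
  intro B hB
  induction hB using Algebra.adjoin_induction with
  | mem B hB =>
    rcases hB with rfl | rfl
    · exact hA
    · exact hAstar
  | algebraMap k =>
    intro w hw
    rw [Algebra.algebraMap_eq_smul_one, smul_mulVec, one_mulVec]
    exact U.smul_mem _ hw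
  | add B C _ _ hB hC =>
    intro w hw
    rw [add_mulVec]
    exact add_mem (hB w hw) (hC w hw)
  | mul B C _ _ hB hC =>
    intro w hw
    rw [← mulVec_mulVec]
    exact hB _ (hC w hw)

end TSetup

namespace TMod

variable {S : TSetup X} (M : TMod S)

theorem actW_apply {B : Matrix X X ℂ} (hB : B ∈ S.T) (w : M.W) :
    (actW S M B w : X → ℂ) = B *ᵥ w := by
  have h_inv : ∀ w ∈ M.W, B.mulVecLin w ∈ M.W := M.hWinv B hB
  rw [actW, dif_pos h_inv]
  rfl

theorem actW_mul {B C : Matrix X X ℂ} (hB : B ∈ S.T) (hC : C ∈ S.T) :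
    actW S M (B * C) = actW S M B * actW S M C := by
  ext w : 2
  simp [M.actW_apply, hB, hC, mul_mem hB hC]

theorem endpoint_add_diameter_le : M.r + M.d ≤ S.D := by
  by_contra! h_lt
  exact (M.hr (M.r + M.d)).2 ⟨by lia, le_rfl⟩ (by simp [S.hEstarzero _ h_lt])

theorem Estar_mulVec_eq_zero {w : X → ℂ} (hw : w ∈ M.W) {i : ℕ}
    (hi : ¬(M.r ≤ i ∧ i ≤ M.r + M.d)) : S.Estar i *ᵥ w = 0 := by
  have h_bot : M.W.map (S.Estar i).mulVecLin = ⊥ := by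
    rwa [← M.hr i, not_ne_iff] at hi
  exact LinearMap.le_ker_iff_map.2 h_bot hw

theorem sum_Estar_mulVec {w : X → ℂ} (hw : w ∈ M.W) :
    ∑ i ∈ Finset.range (M.d + 1), S.Estar (M.r + i) *ᵥ w = w := by
  have h_le := M.endpoint_add_diameter_le
  calc ∑ i ∈ Finset.range (M.d + 1), S.Estar (M.r + i) *ᵥ w
      = ∑ i ∈ Finset.Ico M.r (M.r + M.d + 1), S.Estar i *ᵥ w := by
        rw [Finset.sum_Ico_eq_sum_range, add_assoc, Nat.add_sub_cancel_left]
    _ = ∑ i ∈ Finset.range (S.D + 1), S.Estar i *ᵥ w := by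
        refine Finset.sum_subset (fun i hi ↦ ?_) fun i _ hi ↦ M.Estar_mulVec_eq_zero hw ?_
        · simp only [Finset.mem_Ico, Finset.mem_range] at hi ⊢
          lia
        · simpa [Nat.lt_succ_iff] using hi
    _ = w := by rw [← sum_mulVec, S.sum_Estar, one_mulVec]

theorem Astar_mulVec {w : X → ℂ} (hw : w ∈ M.W) :
    S.Astar *ᵥ w =
      ∑ i ∈ Finset.range (M.d + 1), (S.θstar (M.r + i) : ℂ) • S.Estar (M.r + i) *ᵥ w := by
  conv_lhs => rw [← M.sum_Estar_mulVec hw]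
  simp only [mulVec_sum, mulVec_mulVec, S.Astar_mul_Estar, smul_mulVec]

theorem eq_bot_or_top_of_invariant (U : Submodule ℂ M.W)
    (hA : U ∈ Module.End.invtSubmodule (actW S M S.A))
    (hEstar : ∀ i, U ∈ Module.End.invtSubmodule (actW S M (S.Estar (M.r + i)))) :
    U = ⊥ ∨ U = ⊤ := by
  have h_inv : ∀ B ∈ S.T, ∀ w ∈ U.map M.W.subtype, B *ᵥ w ∈ U.map M.W.subtype := by
    refine S.mulVec_mem_of_mem_T ?_ ?_
    · rintro _ ⟨w, hw, rfl⟩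
      exact ⟨_, hA hw, M.actW_apply S.A_mem_T w⟩
    · rintro _ ⟨w, hw, rfl⟩
      rw [Submodule.coe_subtype, M.Astar_mulVec w.2]
      refine sum_mem fun i _ ↦ Submodule.smul_mem _ _ ?_
      exact ⟨_, hEstar i hw, M.actW_apply (S.Estar_mem_T _) w⟩
  refine (M.hWirr _ (Submodule.map_subtype_le _ _) h_inv).imp (fun h_bot ↦ ?_) fun h_eq ↦ ?_
  · exact Submodule.map_injective_of_injective M.W.injective_subtype (by simpa using h_bot)
  · exact Submodule.map_injective_of_injective M.W.injective_subtype (by simpa using h_eq)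

theorem isIrreducibleDecomposition :
    IsIrreducibleDecomposition (actW S M S.A) (fun i ↦ actW S M (S.Estar (M.r + i))) M.d where
  orthogonal := by
    refine OrthogonalIdempotents.iff_mul_eq.2 fun i j ↦ ?_
    rw [← M.actW_mul (S.Estar_mem_T _) (S.Estar_mem_T _), S.orthogonalIdempotents_Estar.mul_eq]
    split_ifs with h₁ h₂ h₂
    · rfl
    · lia
    · lia
    · ext w : 2
      simp [M.actW_apply (zero_mem S.T)]
  sum_eq_one := by
    ext w : 2
    simpa [LinearMap.sum_apply, M.actW_apply (S.Estar_mem_T _)] using M.sum_Estar_mulVec w.2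
  ne_zero i hi h_zero := by
    refine (M.hr (M.r + i)).2 ⟨by lia, by lia⟩ ((Submodule.eq_bot_iff _).2 ?_)
    rintro _ ⟨w, hw, rfl⟩
    rw [mulVecLin_apply, ← M.actW_apply (S.Estar_mem_T _) ⟨w, hw⟩, h_zero]
    rfl
  irreducible := M.eq_bot_or_top_of_invariant

theorem isTridiagonalOn_actW_iff {u : M.W} {a b c : ℕ → ℂ} :
    IsTridiagonalOn (actW S M S.A) (fun i ↦ actW S M (S.Estar (M.r + i)) u) M.d a b c ↔
      ∀ i ≤ M.d, S.A *ᵥ (S.Estar (M.r + i) *ᵥ (u : X → ℂ)) =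
        (if i = 0 then 0 else b (i - 1) • (S.Estar (M.r + (i - 1)) *ᵥ (u : X → ℂ))) +
          a i • (S.Estar (M.r + i) *ᵥ (u : X → ℂ)) +
          c (i + 1) • (S.Estar (M.r + (i + 1)) *ᵥ (u : X → ℂ)) := by
  simp [IsTridiagonalOn, Subtype.ext_iff, M.actW_apply S.A_mem_T,
    M.actW_apply (S.Estar_mem_T _), apply_ite (Subtype.val : M.W → X → ℂ)]

theorem map_E_le (i : ℕ) : M.W.map (S.E i).mulVecLin ≤ M.W := by
  rintro _ ⟨w, hw, rfl⟩
  exact M.hWinv _ (S.E_mem_T i) w hw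

theorem actW_A_apply {i : ℕ} {u : M.W} (hu : (u : X → ℂ) ∈ M.W.map (S.E i).mulVecLin) :
    actW S M S.A u = (S.θ i : ℂ) • u := by
  obtain ⟨w, _, hw⟩ := hu
  ext1
  rw [M.actW_apply S.A_mem_T, Submodule.coe_smul, ← hw, mulVecLin_apply, mulVec_mulVec,
    S.A_mul_E, smul_mulVec]

theorem xW_succ (i : ℕ) :
    xW S M (i + 1) = LinearMap.trace ℂ M.W (actW S M (S.Estar (M.r + (i + 1))) * actW S M S.A *
      actW S M (S.Estar (M.r + i)) * actW S M S.A) := by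
  have hA := S.A_mem_T
  have hE := S.Estar_mem_T
  rw [xW, if_neg i.succ_ne_zero, trW, ← add_assoc, Nat.add_sub_cancel,
    M.actW_mul (mul_mem (mul_mem (hE _) hA) (hE _)) hA, M.actW_mul (mul_mem (hE _) hA) (hE _),
    M.actW_mul (hE _) hA]

theorem pW_eq_recurrencePoly : ∀ i, pW S M i = recurrencePoly (aW S M) (xW S M) i
  | 0 | 1 => rfl
  | n + 2 => by
    rw [pW, recurrencePoly, pW_eq_recurrencePoly (n + 1), pW_eq_recurrencePoly n]

end TMod

/-- `b_0(W) ⋯ b_{i-1}(W) = p_i(θ_t)` for `0 ≤ i ≤ d`; consequently `p_i(θ_t) ≠ 0`,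
`b_i(W) = p_{i+1}(θ_t)/p_i(θ_t)` and `c_i(W) = x_i(W) p_{i-1}(θ_t)/p_i(θ_t)`. -/
theorem stmt11 (S : TSetup X) (M : TMod S) (hd : 0 < M.d) (b c : ℕ → ℂ)
    (hbd : b M.d = 0) (hc0 : c 0 = 0) (hcd : c (M.d + 1) = 0)
    (hbc : ∀ u ∈ M.W.map (S.E M.t).mulVecLin, u ≠ 0 → ∀ i ≤ M.d,
      S.A *ᵥ (S.Estar (M.r + i) *ᵥ u) =
        (if i = 0 then 0 else b (i - 1) • (S.Estar (M.r + (i - 1)) *ᵥ u))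
          + aW S M i • (S.Estar (M.r + i) *ᵥ u)
          + c (i + 1) • (S.Estar (M.r + (i + 1)) *ᵥ u)) :
    (∀ i ≤ M.d,
      ∏ h ∈ Finset.range i, b h = (pW S M i).eval ((S.θ M.t : ℂ))) ∧
    (∀ i ≤ M.d, (pW S M i).eval ((S.θ M.t : ℂ)) ≠ 0) ∧
    (∀ i ≤ M.d - 1,
      b i = (pW S M (i + 1)).eval ((S.θ M.t : ℂ)) / (pW S M i).eval ((S.θ M.t : ℂ))) ∧
    (∀ i : ℕ, 1 ≤ i → i ≤ M.d →
      c i = xW S M i * (pW S M (i - 1)).eval ((S.θ M.t : ℂ))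
        / (pW S M i).eval ((S.θ M.t : ℂ))) := by
  obtain ⟨u, hu, hu_ne⟩ :=
    Submodule.exists_mem_ne_zero_of_ne_bot ((M.ht M.t).2 ⟨le_rfl, Nat.le_add_right _ _⟩)
  let v : M.W := ⟨u, M.map_E_le M.t hu⟩
  simpa only [M.pW_eq_recurrencePoly, Nat.le_sub_one_iff_lt hd] using
    stmt11_general M.isIrreducibleDecomposition (u := v) (by simpa [v] using hu_ne)
      (M.actW_A_apply hu) (M.isTridiagonalOn_actW_iff.2 (hbc u hu hu_ne)) fun i _ ↦ M.xW_succ i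
end
end

section
/- The following hold on W: ν(W)·E_tE*_rE_t = E_t and ν(W)·E*_rE_tE*_r = E*_r; that is, for all w ∈ W, ν(W)E_tE*_rE_t w = E_t w and ν(W)E*_rE_tE*_r w = E*_r w. -/
open Matrix
open scoped Classical

noncomputable section

variable {X : Type*} [Fintype X] [DecidableEq X]

/-!
If `P` is an endomorphism of rank at most one, then `P * B * P = tr(B * P) • P` for every `B`,
because `P` factors through a line, on which every endomorphism is a scalar. Both identities are
this fact on `W`, with `P` the action of `E_t` or of `E*_r`, together with
`ν(W) = tr_W(E_t E*_r)⁻¹`. That `E*_r` has rank at most one on `W` is thinness. For `E_t`, count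
dimensions: both families of idempotents decompose `W`, the `E*_i` have only `d + 1` nonzero blocks,
each a line, so `dim W ≤ d + 1`, while `d + 1` of the `E_i W` are nonzero and hence are lines too.
-/

section RankOne

variable {K V : Type*} [Field K] [AddCommGroup V] [Module K V] [FiniteDimensional K V]

theorem eq_trace_smul_one_of_finrank_le_one (hV : Module.finrank K V ≤ 1) (f : Module.End K V) :
    f = LinearMap.trace K V f • 1 := by
  rcases Nat.le_one_iff_eq_zero_or_eq_one.1 hV with h0 | h1
  · have := Module.finrank_zero_iff.1 h0
    exact LinearMap.ext fun _ => Subsingleton.elim _ _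
  · obtain ⟨c, hc, -⟩ := f.existsUnique_eq_smul_id_of_finrank_eq_one h1
    simp [hc, h1, Module.End.one_eq_id]

theorem mul_mul_self_eq_trace_smul_of_finrank_range_le_one (P B : Module.End K V)
    (hP : Module.finrank K (LinearMap.range P) ≤ 1) :
    P * B * P = LinearMap.trace K V (B * P) • P := by
  let ι := (LinearMap.range P).subtype
  let π := P.rangeRestrict
  have hιπ : ι ∘ₗ π = P := P.subtype_comp_codRestrict _ _
  have htr : LinearMap.trace K _ (π ∘ₗ B ∘ₗ ι) = LinearMap.trace K V (B * P) := by
    rw [LinearMap.trace_comp_comm', LinearMap.comp_assoc, hιπ, Module.End.mul_eq_comp]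
  calc P * B * P = ι ∘ₗ (π ∘ₗ B ∘ₗ ι) ∘ₗ π := by
        simp only [Module.End.mul_eq_comp, ← hιπ, LinearMap.comp_assoc]
    _ = ι ∘ₗ (LinearMap.trace K V (B * P) • 1) ∘ₗ π := by
        rw [eq_trace_smul_one_of_finrank_le_one hP (π ∘ₗ B ∘ₗ ι), htr]
    _ = LinearMap.trace K V (B * P) • P := by
        rw [Module.End.one_eq_id, LinearMap.smul_comp, LinearMap.comp_smul, LinearMap.id_comp, hιπ]

end RankOne

section Idempotents

variable {K ι : Type*} [Field K] [Fintype ι]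

theorem completeOrthogonalIdempotents_diagonal_single {n R : Type*} [Fintype n] [DecidableEq n]
    [DecidableEq ι] [Semiring R] (δ : n → ι) :
    CompleteOrthogonalIdempotents fun i =>
      Matrix.diagonal fun y => (Pi.single i 1 : ι → R) (δ y) :=
  (CompleteOrthogonalIdempotents.single fun _ : ι => R).map
    ((Matrix.diagonalRingHom n R).comp (RingHom.pi fun y => Pi.evalRingHom (fun _ => R) (δ y)))

theorem mem_adjoin_sum_smul {R : Type*} [Ring R] [Algebra K R] {e : ι → R}
    (he : CompleteOrthogonalIdempotents e) {θ : ι → K} (hθ : Function.Injective θ) (i : ι) :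
    e i ∈ Algebra.adjoin K {∑ j, θ j • e j} := by
  set a := ∑ j, θ j • e j with ha
  let p := Lagrange.basis Finset.univ θ i
  have mul_e (j : ι) : a * e j = θ j • e j := by
    simp [ha, Finset.sum_mul, he.mul_eq]
  have aeval_mul_e (j : ι) : Polynomial.aeval a p * e j = p.eval (θ j) • e j := by
    have := Module.End.aeval_apply_of_mem_apply_eq_smul (f := Algebra.lmul K R a) (p := p) (mul_e j)
    rwa [Polynomial.aeval_algHom_apply] at this
  have aeval_eq : Polynomial.aeval a p = e i :=
    calc Polynomial.aeval a p = ∑ j, Polynomial.aeval a p * e j := by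
          rw [← Finset.mul_sum, he.complete, mul_one]
      _ = ∑ j, p.eval (θ j) • e j := Finset.sum_congr rfl fun j _ => aeval_mul_e j
      _ = p.eval (θ i) • e i := Finset.sum_eq_single i
          (fun j _ hj => by
            rw [Lagrange.eval_basis_of_ne hj.symm (Finset.mem_univ j), zero_smul])
          (fun hi => absurd (Finset.mem_univ i) hi)
      _ = e i := by rw [Lagrange.eval_basis_self hθ.injOn (Finset.mem_univ i), one_smul]
  exact aeval_eq ▸ Polynomial.aeval_mem_adjoin_singleton K a

theorem mem_of_sum_range_smul_mem {R : Type*} [Ring R] [Algebra K R] {T : Subalgebra K R} {n : ℕ}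
    {e : ℕ → R} (he : CompleteOrthogonalIdempotents fun i : Fin n => e i) {θ : ℕ → K}
    (hθ : Set.InjOn θ (Set.Iio n)) (hT : ∑ i ∈ Finset.range n, θ i • e i ∈ T) {i : ℕ} (hi : i < n) :
    e i ∈ T := by
  have hmem := mem_adjoin_sum_smul he (θ := fun j => θ j)
    (fun j k hjk => Fin.ext (hθ j.is_lt k.is_lt hjk)) ⟨i, hi⟩
  rw [Fin.sum_univ_eq_sum_range fun j => θ j • e j] at hmem
  exact Algebra.adjoin_le (Set.singleton_subset_iff.2 hT) hmem

variable {V : Type*} [AddCommGroup V] [Module K V]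

/-- The decomposition of a space as the product of the ranges of a complete family of orthogonal
idempotent endomorphisms. -/
def piRangeEquiv {e : ι → Module.End K V} (he : CompleteOrthogonalIdempotents e) :
    V ≃ₗ[K] ∀ i, LinearMap.range (e i) :=
  LinearEquiv.ofLinearMap (LinearMap.pi fun i => (e i).rangeRestrict)
    (LinearMap.lsum K _ K fun i => (LinearMap.range (e i)).subtype)
    (by
      refine LinearMap.ext fun v => funext fun j => Subtype.ext ?_
      have e_apply (i : ι) : e j (v i) = if i = j then (v i : V) else 0 := by
        obtain ⟨u, hu⟩ := (v i).2
        rw [← hu, ← Module.End.mul_apply, he.mul_eq]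
        rcases eq_or_ne i j with rfl | hij
        · simp
        · simp [hij, hij.symm]
      simp [e_apply])
    (by
      ext v
      simpa using LinearMap.congr_fun he.complete v)

variable [FiniteDimensional K V] {e : ι → Module.End K V}

theorem sum_finrank_range_eq_finrank (he : CompleteOrthogonalIdempotents e) :
    ∑ i, Module.finrank K (LinearMap.range (e i)) = Module.finrank K V := by
  rw [(piRangeEquiv he).finrank_eq, Module.finrank_pi_fintype]

theorem finrank_le_card_ne_zero (he : CompleteOrthogonalIdempotents e)
    (hrank : ∀ i, Module.finrank K (LinearMap.range (e i)) ≤ 1) :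
    Module.finrank K V ≤ Finset.card {i | e i ≠ 0} :=
  calc Module.finrank K V = ∑ i, Module.finrank K (LinearMap.range (e i)) :=
        (sum_finrank_range_eq_finrank he).symm
    _ ≤ ∑ i, if e i ≠ 0 then 1 else 0 := Finset.sum_le_sum fun i _ => by
        split_ifs with hi
        · exact hrank i
        · simp [not_not.1 hi]
    _ = Finset.card {i | e i ≠ 0} := (Finset.card_filter _ _).symm

theorem finrank_range_le_one_of_finrank_le_card_ne_zero (he : CompleteOrthogonalIdempotents e)
    (hcard : Module.finrank K V ≤ Finset.card {i | e i ≠ 0}) (i : ι) :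
    Module.finrank K (LinearMap.range (e i)) ≤ 1 := by
  have hle (j : ι) : (if e j ≠ 0 then 1 else 0) ≤ Module.finrank K (LinearMap.range (e j)) := by
    split_ifs with hj
    · exact Submodule.one_le_finrank_iff.2 (LinearMap.range_eq_bot.not.2 hj)
    · exact Nat.zero_le _
  rw [← sum_finrank_range_eq_finrank he, Finset.card_filter] at hcard
  have heq := (Finset.sum_eq_sum_iff_of_le fun j _ => hle j).1
    (hcard.antisymm' (Finset.sum_le_sum fun j _ => hle j)) i (Finset.mem_univ i)
  rw [← heq]
  split_ifs <;> simp

end Idempotents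

theorem card_fin_filter_mem_Icc {n a b : ℕ} (hb : b < n) :
    Finset.card {i : Fin n | a ≤ i ∧ i ≤ b} = b + 1 - a := by
  rw [← Nat.card_Icc, ← Finset.card_map Fin.valEmbedding]
  congr 1
  ext i
  simp only [Finset.mem_map, Finset.mem_filter_univ, Fin.valEmbedding_apply, Finset.mem_Icc]
  exact ⟨fun ⟨_, hk, hki⟩ => hki ▸ hk, fun hi => ⟨⟨i, hi.2.trans_lt hb⟩, hi, rfl⟩⟩

namespace TSetup

variable (S : TSetup X)

theorem completeOrthogonalIdempotents_E :
    CompleteOrthogonalIdempotents fun i : Fin (S.D + 1) => S.E i where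
  __ := OrthogonalIdempotents.iff_mul_eq.2 fun i j => by
    simp only [S.hEidem i j i.is_le j.is_le, Fin.ext_iff]
  complete := by rw [Fin.sum_univ_eq_sum_range, S.hEsum]

theorem completeOrthogonalIdempotents_Estar :
    CompleteOrthogonalIdempotents fun i : Fin (S.D + 1) => S.Estar i := by
  let δ (y : X) : Fin (S.D + 1) := ⟨S.G.dist S.x y, Nat.lt_succ_of_le (S.hDiamLe S.x y)⟩
  convert completeOrthogonalIdempotents_diagonal_single (R := ℂ) δ with i
  ext y z
  simp only [S.hEstar i i.is_le, Matrix.diagonal_apply, ite_and, Pi.single_apply, δ, Fin.ext_iff]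

end TSetup

namespace TMod

variable {S : TSetup X} (M : TMod S)

/-- The action of the Terwilliger algebra on the module `W`, as an algebra homomorphism. -/
def rep : S.T →ₐ[ℂ] Module.End ℂ M.W where
  toFun B := (B : Matrix X X ℂ).mulVecLin.restrict (M.hWinv B B.2)
  map_one' := LinearMap.ext fun w => Subtype.ext (Matrix.one_mulVec (w : X → ℂ))
  map_mul' B C := LinearMap.ext fun w => Subtype.ext
    (Matrix.mulVec_mulVec (w : X → ℂ) (B : Matrix X X ℂ) (C : Matrix X X ℂ)).symm
  map_zero' := LinearMap.ext fun w => Subtype.ext (Matrix.zero_mulVec (w : X → ℂ))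
  map_add' B C := LinearMap.ext fun w => Subtype.ext
    (Matrix.add_mulVec (B : Matrix X X ℂ) (C : Matrix X X ℂ) (w : X → ℂ))
  commutes' c := by ext; simp [Algebra.algebraMap_eq_smul_one]

theorem trW_eq_trace_rep (B : S.T) : trW S M B = LinearMap.trace ℂ M.W (M.rep B) := by
  have h : ∀ w ∈ M.W, (B : Matrix X X ℂ).mulVecLin w ∈ M.W := M.hWinv B B.2
  rw [trW, actW, dif_pos h]
  rfl

theorem trW_mul_comm (B C : S.T) : trW S M (B * C) = trW S M (C * B) := by
  simpa only [trW_eq_trace_rep, map_mul, ← Subalgebra.coe_mul] using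
    LinearMap.trace_mul_comm ℂ (M.rep B) (M.rep C)

theorem map_subtype_range_rep (B : S.T) :
    (LinearMap.range (M.rep B)).map M.W.subtype = M.W.map (B : Matrix X X ℂ).mulVecLin := by
  rw [← LinearMap.range_comp, ← LinearMap.range_domRestrict]
  rfl

theorem finrank_range_rep (B : S.T) :
    Module.finrank ℂ (LinearMap.range (M.rep B)) =
      Module.finrank ℂ (M.W.map (B : Matrix X X ℂ).mulVecLin) := by
  rw [← M.map_subtype_range_rep, Submodule.finrank_map_subtype_eq]

theorem rep_ne_zero_iff (B : S.T) : M.rep B ≠ 0 ↔ M.W.map (B : Matrix X X ℂ).mulVecLin ≠ ⊥ := by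
  rw [← M.map_subtype_range_rep, ne_eq, ne_eq,
    (Submodule.map_injective_of_injective M.W.injective_subtype).eq_iff' (Submodule.map_bot _),
    LinearMap.range_eq_bot]

theorem completeOrthogonalIdempotents_rep {ι : Type*} [Fintype ι] {F : ι → S.T}
    (hF : CompleteOrthogonalIdempotents fun i => (F i : Matrix X X ℂ)) :
    CompleteOrthogonalIdempotents fun i => M.rep (F i) :=
  ((CompleteOrthogonalIdempotents.map_injective_iff S.T.val.toRingHom
    Subtype.val_injective).1 hF).map M.rep.toRingHom

theorem mul_mul_mulVec_eq_trW_smul (B C : S.T)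
    (hB : Module.finrank ℂ (M.W.map (B : Matrix X X ℂ).mulVecLin) ≤ 1) {w : X → ℂ} (hw : w ∈ M.W) :
    (B * C * B : Matrix X X ℂ) *ᵥ w = trW S M (C * B) • ((B : Matrix X X ℂ) *ᵥ w) := by
  have hrep := mul_mul_self_eq_trace_smul_of_finrank_range_le_one (M.rep B) (M.rep C)
    ((M.finrank_range_rep B).trans_le hB)
  rw [← map_mul, ← map_mul, ← map_mul, ← M.trW_eq_trace_rep] at hrep
  exact congrArg Subtype.val (LinearMap.congr_fun hrep ⟨w, hw⟩)

theorem card_rep_ne_zero {F : ℕ → S.T} (hzero : ∀ i, S.D < i → F i = 0) {a : ℕ}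
    (hsupp : ∀ i, M.W.map (F i : Matrix X X ℂ).mulVecLin ≠ ⊥ ↔ a ≤ i ∧ i ≤ a + M.d) :
    Finset.card {i : Fin (S.D + 1) | M.rep (F i) ≠ 0} = M.d + 1 := by
  simp only [← rep_ne_zero_iff] at hsupp
  have hlt : a + M.d < S.D + 1 := by
    by_contra! h
    exact (hsupp (a + M.d)).2 ⟨Nat.le_add_right _ _, le_rfl⟩ (by rw [hzero _ h, map_zero])
  simp only [hsupp, card_fin_filter_mem_Icc hlt]
  omega

theorem finrank_W_le_d_add_one : Module.finrank ℂ M.W ≤ M.d + 1 := by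
  let F (i : ℕ) : S.T := ⟨S.Estar i, S.Estar_mem_T i⟩
  have hF := M.completeOrthogonalIdempotents_rep (F := fun i : Fin (S.D + 1) => F i)
    S.completeOrthogonalIdempotents_Estar
  have hcard := M.card_rep_ne_zero (F := F) (fun i hi => Subtype.ext (S.hEstarzero i hi)) M.hr
  exact (finrank_le_card_ne_zero hF fun i =>
    (M.finrank_range_rep (F i)).trans_le (M.hthin i)).trans hcard.le

theorem finrank_map_E_le_one (i : ℕ) : Module.finrank ℂ (M.W.map (S.E i).mulVecLin) ≤ 1 := by
  rcases le_or_gt i S.D with hi | hi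
  · let F (i : ℕ) : S.T := ⟨S.E i, S.E_mem_T i⟩
    have hF := M.completeOrthogonalIdempotents_rep (F := fun i : Fin (S.D + 1) => F i)
      S.completeOrthogonalIdempotents_E
    have hcard := M.card_rep_ne_zero (F := F) (fun i hi => Subtype.ext (S.hEzero i hi)) M.ht
    rw [← M.finrank_range_rep (F i)]
    exact finrank_range_le_one_of_finrank_le_card_ne_zero hF
      (M.finrank_W_le_d_add_one.trans hcard.ge) ⟨i, Nat.lt_succ_of_le hi⟩
  · have hmap : M.W.map (S.E i).mulVecLin = ⊥ := by
      rw [S.hEzero i hi, Matrix.mulVecLin_zero, Submodule.map_zero]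
    rw [hmap, finrank_bot]
    exact zero_le_one

end TMod

/-- `ν(W) E_t E*_r E_t = E_t` and `ν(W) E*_r E_t E*_r = E*_r` hold on `W`, where `ν(W)` is
the multiplicative inverse of the positive real number `m_0(W) = tr_W(E_t E*_r)`. -/
theorem stmt13 (S : TSetup X) (M : TMod S) (hd : 0 < M.d)
    (hm0 : (trW S M (S.E M.t * S.Estar M.r)).im = 0 ∧
      0 < (trW S M (S.E M.t * S.Estar M.r)).re) :
    ∀ w ∈ M.W,
      nuW S M • ((S.E M.t * S.Estar M.r * S.E M.t) *ᵥ w) = S.E M.t *ᵥ w ∧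
      nuW S M • ((S.Estar M.r * S.E M.t * S.Estar M.r) *ᵥ w) = S.Estar M.r *ᵥ w := by
  let e : S.T := ⟨S.E M.t, S.E_mem_T M.t⟩
  let f : S.T := ⟨S.Estar M.r, S.Estar_mem_T M.r⟩
  have hm0_ne : trW S M (S.E M.t * S.Estar M.r) ≠ 0 := fun h =>
    hm0.2.ne' (by rw [h, Complex.zero_re])
  intro w hw
  have hefe : (S.E M.t * S.Estar M.r * S.E M.t) *ᵥ w =
      trW S M (S.E M.t * S.Estar M.r) • (S.E M.t *ᵥ w) := by
    rw [M.trW_mul_comm e f]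
    exact M.mul_mul_mulVec_eq_trW_smul e f (M.finrank_map_E_le_one M.t) hw
  have hfef : (S.Estar M.r * S.E M.t * S.Estar M.r) *ᵥ w =
      trW S M (S.E M.t * S.Estar M.r) • (S.Estar M.r *ᵥ w) :=
    M.mul_mul_mulVec_eq_trW_smul f e (M.hthin M.r) hw
  rw [hefe, hfef, nuW, inv_smul_smul₀ hm0_ne, inv_smul_smul₀ hm0_ne]
  exact ⟨rfl, rfl⟩
end
end
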